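/- Let P ⊆ ℝ^d be an integral polytope with the integer decomposition property, and define p_k(z) = Σ_{x ∈ kP ∩ ℤ^d} z^x. Then the sequence {p_k(z)}_{k≥0} satisfies a linear recurrence with characteristic polynomial ∏_{x ∈ P ∩ ℤ^d} (t − z^x). -/

import Mathlib

open Polynomial Finset Pointwise

/-- The lattice points of the `k`-th dilate of `P ⊆ ℝ^d`. -/
def latticePoints {d : ℕ} (P : Set (Fin d → ℝ)) (k : ℕ) : Set (Fin d → ℤ) :=
  {x : Fin d → ℤ | (fun i => (x i : ℝ)) ∈ (k : ℝ) • P}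

open Classical Filter Topology in
/-- Just to the right of `b`, membership in a closed interval changes only if `b` is its maximum. -/
lemma eventually_indicator_sub_eq_isGreatest {J : Set ℝ} (hc : IsClosed J) (ho : J.OrdConnected)
    (b : ℝ) : ∀ᶠ t in 𝓝[>] b,
      (if b ∈ J then (1 : ℤ) else 0) - (if t ∈ J then 1 else 0) =
        if IsGreatest J b then 1 else 0 := by
  by_cases hb : b ∈ J
  · by_cases hg : IsGreatest J b
    · filter_upwards [self_mem_nhdsWithin] with t ht
      have : t ∉ J := fun h => (hg.2 h).not_gt ht
      simp [hb, hg, this]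
    · obtain ⟨u, hu, hbu⟩ : ∃ u ∈ J, b < u := by
        simpa [IsGreatest, hb, mem_upperBounds] using hg
      filter_upwards [Ioo_mem_nhdsGT hbu] with t ht
      have : t ∈ J := ho.out hb hu ⟨ht.1.le, ht.2.le⟩
      simp [hb, hg, this]
  · have hg : ¬ IsGreatest J b := fun h => hb h.1
    filter_upwards [nhdsWithin_le_nhds (hc.isOpen_compl.mem_nhds hb)] with t ht
    have : t ∉ J := ht
    simp [hb, hg, this]

open Classical in
/-- A closed set of reals meets `[0, ∞)` but not `[1, ∞)` iff its maximum lies in `[0, 1)`. -/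
lemma exists_nonneg_sub_exists_one_le_eq_sum {J : Set ℝ} (hc : IsClosed J) (hb : BddAbove J)
    {B : Finset ℝ} (hB : sSup J ∈ B) :
    (if ∃ t, 0 ≤ t ∧ t ∈ J then (1 : ℤ) else 0) - (if ∃ t, 1 ≤ t ∧ t ∈ J then 1 else 0) =
      ∑ b ∈ B with 0 ≤ b ∧ b < 1, if IsGreatest J b then 1 else 0 := by
  rcases J.eq_empty_or_nonempty with rfl | hne
  · simp [IsGreatest]
  have hg : IsGreatest J (sSup J) := hc.isGreatest_csSup hne hb
  have hiff (b : ℝ) : IsGreatest J b ↔ sSup J = b := ⟨hg.unique, fun h => h ▸ hg⟩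
  have hmeet (r : ℝ) : (∃ t, r ≤ t ∧ t ∈ J) ↔ r ≤ sSup J :=
    ⟨fun ⟨t, hrt, ht⟩ => hrt.trans (hg.2 ht), fun h => ⟨_, h, hg.1⟩⟩
  simp only [hiff, hmeet, Finset.sum_ite_eq, Finset.mem_filter, hB, true_and]
  split_ifs <;> first | rfl | (exfalso; grind)

open Classical Filter Topology in
/-- If a signed sum of indicators of closed intervals vanishes on `[0, 1)`, so does the signed
count of those intervals whose maximum lies in `[0, 1)`. -/
lemma sum_exists_sub_eq_zero {κ : Type*} (T : Finset κ) (c : κ → ℤ) (J : κ → Set ℝ)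
    (hc : ∀ i ∈ T, IsClosed (J i)) (ho : ∀ i ∈ T, (J i).OrdConnected)
    (hb : ∀ i ∈ T, BddAbove (J i))
    (h0 : ∀ t : ℝ, 0 ≤ t → t < 1 → ∑ i ∈ T, c i * (if t ∈ J i then 1 else 0) = 0) :
    ∑ i ∈ T, c i * ((if ∃ t, 0 ≤ t ∧ t ∈ J i then 1 else 0) -
      (if ∃ t, 1 ≤ t ∧ t ∈ J i then 1 else 0)) = 0 := by
  have key (b : ℝ) (hb0 : 0 ≤ b) (hb1 : b < 1) :
      ∑ i ∈ T, c i * (if IsGreatest (J i) b then 1 else 0) = 0 := by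
    have hev : ∀ᶠ t in 𝓝[>] b, ∀ i ∈ T,
        (if b ∈ J i then (1 : ℤ) else 0) - (if t ∈ J i then 1 else 0) =
          if IsGreatest (J i) b then 1 else 0 :=
      (T.eventually_all).2 fun i hi =>
        eventually_indicator_sub_eq_isGreatest (hc i hi) (ho i hi) b
    obtain ⟨t, ht, htb⟩ := (hev.and (Ioo_mem_nhdsGT hb1)).exists
    calc _ = ∑ i ∈ T, c i * ((if b ∈ J i then (1 : ℤ) else 0) - (if t ∈ J i then 1 else 0)) :=
          Finset.sum_congr rfl fun i hi => by rw [ht i hi]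
      _ = 0 := by
          simp only [mul_sub, Finset.sum_sub_distrib]
          rw [h0 b hb0 hb1, h0 t (hb0.trans htb.1.le) htb.2, sub_zero]
  calc _ = ∑ i ∈ T, c i * ∑ b ∈ T.image (fun i => sSup (J i)) with 0 ≤ b ∧ b < 1,
            if IsGreatest (J i) b then 1 else 0 :=
        Finset.sum_congr rfl fun i hi => by
          rw [exists_nonneg_sub_exists_one_le_eq_sum (hc i hi) (hb i hi)
            (Finset.mem_image_of_mem (fun i => sSup (J i)) hi)]
    _ = 0 := by
        simp only [Finset.mul_sum]
        rw [Finset.sum_comm]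
        exact Finset.sum_eq_zero fun b hb => by
          simp only [Finset.mem_filter] at hb
          exact key b hb.2.1 hb.2.2

section Cone

variable {ι E : Type*} [AddCommGroup E] [Module ℝ E]

/-- The convex cone generated by the vectors `w i`, `i ∈ s`. -/
def posCone (w : ι → E) (s : Finset ι) : Set E :=
  {y | ∃ c : ι → ℝ, (∀ i, 0 ≤ c i) ∧ ∑ i ∈ s, c i • w i = y}

lemma mem_posCone_insert [DecidableEq ι] {w : ι → E} {s : Finset ι} {a : ι} (ha : a ∉ s) {y : E} :
    y ∈ posCone w (insert a s) ↔ ∃ t : ℝ, 0 ≤ t ∧ y - t • w a ∈ posCone w s := by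
  constructor
  · rintro ⟨c, hc, rfl⟩
    exact ⟨c a, hc a, c, hc, by rw [Finset.sum_insert ha]; abel⟩
  · rintro ⟨t, ht, c, hc, h⟩
    refine ⟨Function.update c a t, fun i => ?_, ?_⟩
    · rcases eq_or_ne i a with rfl | hi
      · simpa using ht
      · simpa [hi] using hc i
    · rw [Finset.sum_insert ha, Function.update_self]
      have : ∑ i ∈ s, Function.update c a t i • w i = ∑ i ∈ s, c i • w i :=
        Finset.sum_congr rfl fun i hi => by
          rw [Function.update_of_ne (ne_of_mem_of_not_mem hi ha)]
      rw [this, h]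
      abel

lemma convex_posCone (w : ι → E) (s : Finset ι) : Convex ℝ (posCone w s) := by
  rintro x ⟨c, hc, rfl⟩ y ⟨e, he, rfl⟩ a b ha hb -
  exact ⟨a • c + b • e, fun i => add_nonneg (mul_nonneg ha (hc i)) (mul_nonneg hb (he i)), by
    simp [Finset.smul_sum, Finset.sum_add_distrib, add_smul, mul_smul]⟩

variable [TopologicalSpace E] [IsTopologicalAddGroup E] [ContinuousSMul ℝ E]
  {ht : E →L[ℝ] ℝ} {w : ι → E}

omit [IsTopologicalAddGroup E] [ContinuousSMul ℝ E] in
lemma height_sum_smul (hw : ∀ i, ht (w i) = 1) (s : Finset ι) (c : ι → ℝ) :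
    ht (∑ i ∈ s, c i • w i) = ∑ i ∈ s, c i := by
  simp [hw]

omit [IsTopologicalAddGroup E] [ContinuousSMul ℝ E] in
lemma height_nonneg_of_mem_posCone (hw : ∀ i, ht (w i) = 1) {s : Finset ι} {y : E}
    (hy : y ∈ posCone w s) : 0 ≤ ht y := by
  obtain ⟨c, hc, rfl⟩ := hy
  rw [height_sum_smul hw]
  exact Finset.sum_nonneg fun i _ => hc i

lemma isClosed_posCone [T2Space E] (hw : ∀ i, ht (w i) = 1) (s : Finset ι) :
    IsClosed (posCone w s) := by
  classical
  refine isClosed_of_closure_subset fun x hx => ?_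
  let M := ht x + 1
  let K : Set E := (fun c : ι → ℝ => ∑ i ∈ s, c i • w i) '' Set.univ.pi fun _ => Set.Icc 0 M
  have hK : IsCompact K :=
    (isCompact_univ_pi fun _ => isCompact_Icc).image (by fun_prop)
  have hxM : x ∈ {y | ht y < M} := lt_add_one (ht x)
  have hopen : IsOpen {y | ht y < M} := isOpen_lt ht.continuous continuous_const
  have hsub : {y | ht y < M} ∩ posCone w s ⊆ K := by
    rintro y ⟨hyM, c, hc, rfl⟩
    have hM : ∑ i ∈ s, c i < M := by simpa [hw] using hyM
    refine ⟨fun i => if i ∈ s then c i else 0, fun i _ => ?_,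
      Finset.sum_congr rfl fun i hi => by simp [hi]⟩
    by_cases hi : i ∈ s
    · simpa [hi, hc i] using (Finset.single_le_sum (fun j _ => hc j) hi).trans hM.le
    · simpa [hi] using (Finset.sum_nonneg fun j _ => hc j).trans hM.le
  obtain ⟨c, hc, rfl⟩ :=
    hK.isClosed.closure_subset_iff.2 hsub (hopen.inter_closure ⟨hxM, hx⟩)
  exact ⟨c, fun i => (hc i trivial).1, rfl⟩

open Classical in
/-- The value at `y` of `∏ i ∈ s, (1 - T_{w i})` applied to the indicator function of the cone
generated by the `w i`, where `T_v` denotes translation by `v`. -/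
noncomputable def coneAltSum (w : ι → E) (s : Finset ι) (y : E) : ℤ :=
  ∑ S ∈ s.powerset, (-1) ^ #S * if y - ∑ i ∈ S, w i ∈ posCone w s then 1 else 0

lemma coneAltSum_insert_eq_zero [T2Space E] [DecidableEq ι] (hw : ∀ i, ht (w i) = 1)
    {s : Finset ι} {a : ι} (ha : a ∉ s) {y : E}
    (h : ∀ t : ℝ, 0 ≤ t → t < 1 → coneAltSum w s (y - t • w a) = 0) :
    coneAltSum w (insert a s) y = 0 := by
  classical
  let J (S : Finset ι) : Set ℝ := {t | y - ∑ i ∈ S, w i - t • w a ∈ posCone w s}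
  have mem_J (S : Finset ι) (t : ℝ) : t ∈ J S ↔ y - ∑ i ∈ S, w i - t • w a ∈ posCone w s :=
    Iff.rfl
  have hJ : ∑ S ∈ s.powerset, (-1) ^ #S * ((if ∃ t, 0 ≤ t ∧ t ∈ J S then (1 : ℤ) else 0) -
      (if ∃ t, 1 ≤ t ∧ t ∈ J S then 1 else 0)) = 0 := by
    refine sum_exists_sub_eq_zero _ _ J (fun S _ => ?_) (fun S _ => ?_) (fun S _ => ?_) ?_
    · exact (isClosed_posCone hw s).preimage (by fun_prop)
    · refine Convex.ordConnected fun t ht u hu p q hp hq hpq => ?_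
      have hy : y - ∑ i ∈ S, w i = (p + q) • (y - ∑ i ∈ S, w i) := by rw [hpq, one_smul]
      have heq : y - ∑ i ∈ S, w i - (p • t + q • u) • w a =
          p • (y - ∑ i ∈ S, w i - t • w a) + q • (y - ∑ i ∈ S, w i - u • w a) := by
        nth_rw 1 [hy]
        simp only [smul_eq_mul]
        module
      rw [mem_J, heq]
      exact convex_posCone w s ht hu hp hq hpq
    · refine ⟨ht (y - ∑ i ∈ S, w i), fun t htJ => ?_⟩
      have := height_nonneg_of_mem_posCone hw htJ
      rw [map_sub, map_smul, hw, smul_eq_mul, mul_one] at this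
      linarith
    · intro t ht0 ht1
      simpa only [mem_J, coneAltSum, sub_right_comm y (t • w a)] using h t ht0 ht1
  rw [← hJ, coneAltSum, Finset.sum_powerset_insert ha, ← Finset.sum_add_distrib]
  refine Finset.sum_congr rfl fun S hS => ?_
  have haS : a ∉ S := fun h => ha (Finset.mem_powerset.1 hS h)
  have hshift : (∃ t : ℝ, 0 ≤ t ∧ y - (w a + ∑ i ∈ S, w i) - t • w a ∈ posCone w s) ↔
      ∃ t, 1 ≤ t ∧ t ∈ J S := by
    constructor
    · rintro ⟨t, ht0, hm⟩
      refine ⟨t + 1, by linarith, ?_⟩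
      rwa [mem_J, show y - ∑ i ∈ S, w i - (t + 1) • w a =
        y - (w a + ∑ i ∈ S, w i) - t • w a by module]
    · rintro ⟨t, ht1, hm⟩
      refine ⟨t - 1, by linarith, ?_⟩
      rwa [show y - (w a + ∑ i ∈ S, w i) - (t - 1) • w a =
        y - ∑ i ∈ S, w i - t • w a by module]
  rw [Finset.card_insert_of_notMem haS, Finset.sum_insert haS]
  simp only [mem_posCone_insert ha, hshift]
  simp only [mem_J]
  ring

lemma coneAltSum_eq_zero_of_card_lt [T2Space E] (hw : ∀ i, ht (w i) = 1) (s : Finset ι) {y : E}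
    (hy : (#s : ℝ) < ht y) : coneAltSum w s y = 0 := by
  classical
  induction s using Finset.induction_on generalizing y with
  | empty =>
    have : y ∉ posCone w ∅ := by
      rintro ⟨c, -, rfl⟩
      simp at hy
    simp [coneAltSum, this]
  | insert a s ha ih =>
    rw [Finset.card_insert_of_notMem ha, Nat.cast_succ] at hy
    refine coneAltSum_insert_eq_zero hw ha fun t _ ht1 => ih ?_
    rw [map_sub, map_smul, hw, smul_eq_mul, mul_one]
    linarith

lemma coneAltSum_eq_zero_of_card_le [T2Space E] (hw : ∀ i, ht (w i) = 1) {s : Finset ι}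
    (hs : s.Nonempty) {y : E} (hy : (#s : ℝ) ≤ ht y) : coneAltSum w s y = 0 := by
  classical
  obtain ⟨a, has⟩ := hs
  obtain ⟨s, ha, rfl⟩ : ∃ s', a ∉ s' ∧ s = insert a s' :=
    ⟨s.erase a, Finset.notMem_erase _ _, (Finset.insert_erase has).symm⟩
  rw [Finset.card_insert_of_notMem ha, Nat.cast_succ] at hy
  refine coneAltSum_insert_eq_zero hw ha fun t _ ht1 => coneAltSum_eq_zero_of_card_lt hw s ?_
  rw [map_sub, map_smul, hw, smul_eq_mul, mul_one]
  linarith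

end Cone

lemma sum_coeff_prod_X_sub_C_mul {ι R : Type*} [CommRing R] [Nontrivial R] (s : Finset ι)
    (a : ι → R) (p : ℕ → R) (k : ℕ) :
    ∑ j ∈ Finset.range ((∏ i ∈ s, (X - C (a i))).natDegree + 1),
        (∏ i ∈ s, (X - C (a i))).coeff j * p (k + j) =
      ∑ S ∈ s.powerset, (-1) ^ #S * ((∏ i ∈ S, a i) * p (k + (#s - #S))) := by
  classical
  have hcoeff (j : ℕ) : (∏ i ∈ s, (X - C (a i))).coeff j =
      ∑ S ∈ s.powerset, if j = #s - #S then (-1) ^ #S * ∏ i ∈ S, a i else 0 := by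
    rw [Finset.prod_sub, finsetSum_coeff]
    refine Finset.sum_congr rfl fun S hS => ?_
    rw [Finset.prod_const, Finset.card_sdiff_of_subset (Finset.mem_powerset.1 hS),
      ← coeff_C_mul_X_pow]
    simp only [map_mul, map_pow, map_neg, map_one, map_prod]
    rw [mul_right_comm]
  rw [natDegree_finsetProd_X_sub_C_eq_card]
  simp only [hcoeff, Finset.sum_mul]
  rw [Finset.sum_comm]
  refine Finset.sum_congr rfl fun S _ => ?_
  simp [ite_mul, mul_assoc]

section LatticePoints

variable {d : ℕ} {P : Set (Fin d → ℝ)}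

lemma finite_latticePoints (hP : Bornology.IsBounded P) (k : ℕ) : (latticePoints P k).Finite := by
  obtain ⟨M, hM⟩ := (hP.smul₀ (k : ℝ)).exists_norm_le
  obtain ⟨N, hN⟩ := exists_nat_ge M
  refine (Set.finite_Icc (fun _ => -(N : ℤ)) fun _ => (N : ℤ)).subset fun x hx => ?_
  have habs (i : Fin d) : |x i| ≤ N := by
    have := (norm_le_pi_norm (fun i => (x i : ℝ)) i).trans ((hM _ hx).trans hN)
    rw [Real.norm_eq_abs] at this
    exact_mod_cast this
  exact ⟨fun i => (abs_le.1 (habs i)).1, fun i => (abs_le.1 (habs i)).2⟩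

open Classical in
lemma coeff_finsum_single {s : Set (Fin d → ℤ)} (hs : s.Finite) (x : Fin d → ℤ) :
    (∑ᶠ y ∈ s, AddMonoidAlgebra.single y (1 : ℤ)).coeff x = if x ∈ s then 1 else 0 := by
  rw [finsum_mem_eq_finite_toFinset_sum _ hs]
  simp [AddMonoidAlgebra.coeff_sum, Finsupp.single_apply, Finsupp.finsetSum_apply]

/-- The lattice point `x`, placed at height one in `ℝ^d × ℝ`. -/
def liftPoint (x : Fin d → ℤ) : (Fin d → ℝ) × ℝ := (fun i => (x i : ℝ), 1)

lemma mem_posCone_liftPoint_iff {V : Finset (Fin d → ℤ)}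
    (hP : P = convexHull ℝ ((fun (v : Fin d → ℤ) (i : Fin d) => (v i : ℝ)) '' V))
    (hne : P.Nonempty) {A : Finset (Fin d → ℤ)} (hA : ∀ x, x ∈ A ↔ x ∈ latticePoints P 1)
    (x : Fin d → ℤ) (m : ℕ) :
    ((fun i => (x i : ℝ), (m : ℝ)) : (Fin d → ℝ) × ℝ) ∈ posCone liftPoint A ↔
      x ∈ latticePoints P m := by
  have hconv : Convex ℝ P := hP ▸ convex_convexHull ℝ _
  have hA' (a : Fin d → ℤ) : a ∈ A ↔ (fun i => (a i : ℝ)) ∈ P := by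
    rw [hA]
    change _ ∈ ((1 : ℕ) : ℝ) • P ↔ _
    rw [Nat.cast_one, one_smul]
  change _ ↔ (fun i => (x i : ℝ)) ∈ (m : ℝ) • P
  constructor
  · rintro ⟨c, hc, h⟩
    have h1 : ∑ a ∈ A, c a • (fun i => (a i : ℝ)) = fun i => (x i : ℝ) := by
      simpa [liftPoint, Prod.fst_sum] using congrArg Prod.fst h
    have h2 : ∑ a ∈ A, c a = m := by
      simpa [liftPoint, Prod.snd_sum] using congrArg Prod.snd h
    rcases m.eq_zero_or_pos with rfl | hm
    · have hc0 := (Finset.sum_eq_zero_iff_of_nonneg fun a _ => hc a).1 (by simpa using h2)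
      rw [Nat.cast_zero, Set.zero_smul_set hne, ← h1, Set.mem_zero]
      exact Finset.sum_eq_zero fun a ha => by rw [hc0 a ha, zero_smul]
    · have hm' : (m : ℝ) ≠ 0 := by positivity
      refine ⟨∑ a ∈ A, (c a / m) • fun i => (a i : ℝ), hconv.sum_mem (fun a _ => ?_) ?_ ?_, ?_⟩
      · exact div_nonneg (hc a) m.cast_nonneg
      · rw [← Finset.sum_div, h2, div_self hm']
      · exact fun a ha => (hA' a).1 ha
      · rw [← h1]
        simp only [Finset.smul_sum, smul_smul, mul_div_cancel₀ _ hm']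
  · rintro ⟨u, hu, hux⟩
    have hsub : P ⊆ {u | ((u, 1) : (Fin d → ℝ) × ℝ) ∈ posCone liftPoint A} := by
      rw [hP]
      refine convexHull_min ?_ fun u hu v hv p q hp hq hpq => ?_
      · rintro _ ⟨v, hv, rfl⟩
        have hvA : v ∈ A := by
          rw [hA', hP]
          exact subset_convexHull ℝ _ ⟨v, hv, rfl⟩
        refine ⟨fun a => if a = v then 1 else 0, fun a => ?_, ?_⟩
        · dsimp only
          split_ifs <;> norm_num
        · simp [hvA, liftPoint]
      · have := convex_posCone (liftPoint (d := d)) A hu hv hp hq hpq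
        simpa [hpq] using this
    obtain ⟨c, hc, h⟩ := hsub hu
    refine ⟨fun a => m * c a, fun a => mul_nonneg m.cast_nonneg (hc a), ?_⟩
    simp only [mul_smul, ← Finset.smul_sum, h]
    simpa using hux

end LatticePoints

/-- Let `P ⊆ ℝ^d` be an integral polytope with the integer decomposition property and let
`p k = ∑_{x ∈ kP ∩ ℤ^d} z^x`, an element of the Laurent monomial algebra
`AddMonoidAlgebra ℤ (Fin d → ℤ)`.  Then `p` satisfies the linear recurrence whose
characteristic polynomial is `∏_{x ∈ P ∩ ℤ^d} (t - z^x)`. -/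
theorem stmt_9 (d : ℕ) (V : Finset (Fin d → ℤ)) (P : Set (Fin d → ℝ))
    (hP : P = convexHull ℝ ((fun (v : Fin d → ℤ) (i : Fin d) => (v i : ℝ)) '' V))
    (hIDP : ∀ k : ℕ, 1 ≤ k → ∀ x ∈ latticePoints P k,
      ∃ y : Fin k → (Fin d → ℤ), (∀ i, y i ∈ latticePoints P 1) ∧ x = ∑ i, y i)
    (p : ℕ → AddMonoidAlgebra ℤ (Fin d → ℤ))
    (hp : ∀ k : ℕ, p k = ∑ᶠ x ∈ latticePoints P k,
      AddMonoidAlgebra.single x (1 : ℤ))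
    (χ : Polynomial (AddMonoidAlgebra ℤ (Fin d → ℤ)))
    (hχ : χ = ∏ᶠ x ∈ latticePoints P 1,
      ((X : Polynomial (AddMonoidAlgebra ℤ (Fin d → ℤ)))
        - C (AddMonoidAlgebra.single x (1 : ℤ)))) :
    ∀ k : ℕ, ∑ j ∈ Finset.range (χ.natDegree + 1), χ.coeff j * p (k + j) = 0 := by
  classical
  intro k
  rcases V.eq_empty_or_nonempty with rfl | hV
  · have hp0 (m : ℕ) : p m = 0 := by
      simp [hp, latticePoints, hP]
    simp [hp0]
  have hne : P.Nonempty := by simpa [hP] using hV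
  have hbdd : Bornology.IsBounded P :=
    hP ▸ ((V.finite_toSet.image _).isCompact_convexHull ℝ).isBounded
  set A := (finite_latticePoints hbdd 1).toFinset with hAdef
  have hA (x : Fin d → ℤ) : x ∈ A ↔ x ∈ latticePoints P 1 := Set.Finite.mem_toFinset _
  have hAne : A.Nonempty := by
    obtain ⟨v, hv⟩ := hV
    refine ⟨v, (hA v).2 ?_⟩
    change _ ∈ ((1 : ℕ) : ℝ) • P
    rw [Nat.cast_one, one_smul, hP]
    exact subset_convexHull ℝ _ ⟨v, hv, rfl⟩
  rw [finprod_mem_eq_finite_toFinset_prod _ (finite_latticePoints hbdd 1), ← hAdef] at hχ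
  rw [hχ, sum_coeff_prod_X_sub_C_mul]
  ext x
  let y : (Fin d → ℝ) × ℝ := (fun i => (x i : ℝ), ((k + #A : ℕ) : ℝ))
  have hzero : coneAltSum liftPoint A y = 0 :=
    coneAltSum_eq_zero_of_card_le (ht := ContinuousLinearMap.snd ℝ (Fin d → ℝ) ℝ)
      (fun _ => rfl) hAne (by simp [y])
  rw [AddMonoidAlgebra.coeff_zero, Finsupp.zero_apply, ← hzero, coneAltSum,
    AddMonoidAlgebra.coeff_sum, Finsupp.finsetSum_apply]
  refine Finset.sum_congr rfl fun S hS => ?_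
  have hcard : #S ≤ #A := Finset.card_le_card (Finset.mem_powerset.1 hS)
  have hsub : y - ∑ a ∈ S, liftPoint a =
      (fun i => ((x - ∑ a ∈ S, a) i : ℝ), ((k + (#A - #S) : ℕ) : ℝ)) := by
    ext
    · simp [y, liftPoint, Prod.fst_sum, Finset.sum_apply]
    · simp [y, liftPoint, Prod.snd_sum, Nat.cast_sub hcard]
      ring
  simp only [hsub, mem_posCone_liftPoint_iff hP hne hA]
  have hsign (f : AddMonoidAlgebra ℤ (Fin d → ℤ)) (n : ℕ) :
      ((-1) ^ n * f).coeff x = (-1) ^ n * f.coeff x := by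
    rcases neg_one_pow_eq_or ℤ n with h | h
    · have h' := congrArg (Int.cast : ℤ → AddMonoidAlgebra ℤ (Fin d → ℤ)) h
      push_cast at h'
      simp [h, h']
    · have h' := congrArg (Int.cast : ℤ → AddMonoidAlgebra ℤ (Fin d → ℤ)) h
      push_cast at h'
      simp [h, h']
  rw [hsign, AddMonoidAlgebra.prod_single, AddMonoidAlgebra.coeff_single_mul_apply, hp,
    coeff_finsum_single (finite_latticePoints hbdd _)]
  simp [neg_add_eq_sub]
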